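/- arXiv:math/0511730 — 4 statements merged into one kernel-verified Lean document; each statement's English description precedes it below -/
import Mathlib

section
/- In the monoid T, the following consequences of the defining relations hold: (i) σ_i θ_j σ_i = σ_j θ_i σ_j and θ_i σ_j θ_i = θ_i whenever |i−j| = 1; and (ii) σ_i σ_{i+1} θ_i θ_{i+2} = σ_{i+2} σ_{i+1} θ_i θ_{i+2} for all 1 ≤ i ≤ n−3. -/
/-!
The Brauer monoid presentation from Kudryavtseva–Mazorchuk,
"On presentations of Brauer-type monoids", Section 3.

Generators: `Sum.inl i` represents `σ_{i+1}` and `Sum.inr i` represents `θ_{i+1}`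
for `i : Fin (n-1)` (so the paper's indices `1, …, n-1` correspond to `i.val + 1`).
-/

/-- Generator type: `Sum.inl i` is `σ_{i+1}`, `Sum.inr i` is `θ_{i+1}`. -/
abbrev BrauerGen (n : ℕ) := Fin (n - 1) ⊕ Fin (n - 1)

/-- The word `σ_{i+1}` in the free monoid. -/
def fσ {n : ℕ} (i : Fin (n - 1)) : FreeMonoid (BrauerGen n) := FreeMonoid.of (Sum.inl i)

/-- The word `θ_{i+1}` in the free monoid. -/
def fθ {n : ℕ} (i : Fin (n - 1)) : FreeMonoid (BrauerGen n) := FreeMonoid.of (Sum.inr i)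

/-- The defining relations of the presentation of the Brauer monoid `𝔅_n`. -/
inductive BrauerRel (n : ℕ) : FreeMonoid (BrauerGen n) → FreeMonoid (BrauerGen n) → Prop
  | sigma_sq (i) : BrauerRel n (fσ i * fσ i) 1
  | sigma_comm (i j) (h : 1 < Nat.dist i.1 j.1) : BrauerRel n (fσ i * fσ j) (fσ j * fσ i)
  | braid (i j) (h : Nat.dist i.1 j.1 = 1) :
      BrauerRel n (fσ i * fσ j * fσ i) (fσ j * fσ i * fσ j)
  | theta_idem (i) : BrauerRel n (fθ i * fθ i) (fθ i)
  | theta_comm (i j) (h : 1 < Nat.dist i.1 j.1) : BrauerRel n (fθ i * fθ j) (fθ j * fθ i)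
  | theta_theta_theta (i j) (h : Nat.dist i.1 j.1 = 1) :
      BrauerRel n (fθ i * fθ j * fθ i) (fθ i)
  | theta_sigma (i) : BrauerRel n (fθ i * fσ i) (fθ i)
  | sigma_theta (i) : BrauerRel n (fσ i * fθ i) (fθ i)
  | theta_sigma_comm (i j) (h : 1 < Nat.dist i.1 j.1) :
      BrauerRel n (fθ i * fσ j) (fσ j * fθ i)
  | sigma_theta_theta (i j) (h : Nat.dist i.1 j.1 = 1) :
      BrauerRel n (fσ i * fθ j * fθ i) (fσ j * fθ i)
  | theta_theta_sigma (i j) (h : Nat.dist i.1 j.1 = 1) :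
      BrauerRel n (fθ i * fθ j * fσ i) (fθ i * fσ j)

/-- The monoid `T` given by the presentation above. -/
abbrev BrauerMonoid (n : ℕ) := PresentedMonoid (BrauerRel n)

/-- The generator `σ_{i+1}` of `T`. -/
def σB {n : ℕ} (i : Fin (n - 1)) : BrauerMonoid n := PresentedMonoid.of (BrauerRel n) (Sum.inl i)

/-- The generator `θ_{i+1}` of `T`. -/
def θB {n : ℕ} (i : Fin (n - 1)) : BrauerMonoid n := PresentedMonoid.of (BrauerRel n) (Sum.inr i)

/-- The point `i` of `{1, …, n}` (0-based: `i.val`). -/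
def lo {n : ℕ} (i : Fin (n - 1)) : Fin n := ⟨i.1, by have := i.2; omega⟩

/-- The point `i + 1` of `{1, …, n}` (0-based: `i.val + 1`). -/
def hi {n : ℕ} (i : Fin (n - 1)) : Fin n := ⟨i.1 + 1, by have := i.2; omega⟩

/-- The adjacent transposition `s_{i+1} = (i+1, i+2)` of the symmetric group on `{1, …, n}`. -/
def sPerm {n : ℕ} (i : Fin (n - 1)) : Equiv.Perm (Fin n) := Equiv.swap (lo i) (hi i)

/-!
Read from right to left, `σ_i θ_j θ_i = σ_j θ_i` expands a product `σ_j θ_i` so that a factor `σ_i`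
appears on its left, where it is absorbed by a preceding `θ_i` or cancelled by a preceding `σ_i`.
The cancellation gives `σ_i σ_j θ_i = θ_j θ_i`, which brings both sides of (ii) to the form
`θ_{i+1} θ_i θ_{i+2}`. The identity `σ_i θ_j σ_i = σ_j θ_i σ_j` holds because both sides equal
`σ_j θ_i θ_j σ_i`.
-/

namespace BrauerMonoid

section DefiningRelations

variable {n : ℕ}

theorem sigma_mul_self (i : Fin (n - 1)) : σB i * σB i = 1 :=
  PresentedMonoid.mk_eq_mk_of_rel (.sigma_sq i)

theorem theta_mul_sigma_self (i : Fin (n - 1)) : θB i * σB i = θB i :=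
  PresentedMonoid.mk_eq_mk_of_rel (.theta_sigma i)

variable {i j : Fin (n - 1)}

theorem commute_theta_theta (hij : 1 < Nat.dist i.1 j.1) : Commute (θB i) (θB j) :=
  PresentedMonoid.mk_eq_mk_of_rel (.theta_comm i j hij)

theorem theta_mul_theta_mul_theta (hij : Nat.dist i.1 j.1 = 1) : θB i * θB j * θB i = θB i :=
  PresentedMonoid.mk_eq_mk_of_rel (.theta_theta_theta i j hij)

theorem sigma_mul_theta_mul_theta (hij : Nat.dist i.1 j.1 = 1) :
    σB i * θB j * θB i = σB j * θB i :=
  PresentedMonoid.mk_eq_mk_of_rel (.sigma_theta_theta i j hij)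

theorem theta_mul_theta_mul_sigma (hij : Nat.dist i.1 j.1 = 1) :
    θB i * θB j * σB i = θB i * σB j :=
  PresentedMonoid.mk_eq_mk_of_rel (.theta_theta_sigma i j hij)

end DefiningRelations

section DerivedRelations

variable {n : ℕ} {i j k : Fin (n - 1)}

theorem sigma_mul_theta_mul_sigma (hij : Nat.dist i.1 j.1 = 1) :
    σB i * θB j * σB i = σB j * θB i * σB j := by
  have hji : Nat.dist j.1 i.1 = 1 := by rwa [Nat.dist_comm]
  calc σB i * θB j * σB i
      = σB j * θB i * θB j * σB i := by rw [sigma_mul_theta_mul_theta hji]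
    _ = σB j * (θB i * θB j * σB i) := by simp only [mul_assoc]
    _ = σB j * θB i * σB j := by rw [theta_mul_theta_mul_sigma hij, mul_assoc]

theorem theta_mul_sigma_mul_theta (hij : Nat.dist i.1 j.1 = 1) :
    θB i * σB j * θB i = θB i :=
  calc θB i * σB j * θB i
      = θB i * (σB i * θB j * θB i) := by rw [sigma_mul_theta_mul_theta hij, mul_assoc]
    _ = θB i * σB i * θB j * θB i := by simp only [mul_assoc]
    _ = θB i := by rw [theta_mul_sigma_self, theta_mul_theta_mul_theta hij]

theorem sigma_mul_sigma_mul_theta (hij : Nat.dist i.1 j.1 = 1) :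
    σB i * σB j * θB i = θB j * θB i :=
  calc σB i * σB j * θB i
      = σB i * (σB i * θB j * θB i) := by rw [sigma_mul_theta_mul_theta hij, mul_assoc]
    _ = σB i * σB i * (θB j * θB i) := by simp only [mul_assoc]
    _ = θB j * θB i := by rw [sigma_mul_self, one_mul]

theorem sigma_mul_sigma_mul_theta_mul_theta (hij : Nat.dist i.1 j.1 = 1)
    (hkj : Nat.dist k.1 j.1 = 1) (hik : 1 < Nat.dist i.1 k.1) :
    σB i * σB j * θB i * θB k = σB k * σB j * θB i * θB k :=
  calc σB i * σB j * θB i * θB k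
      = θB j * θB i * θB k := by rw [sigma_mul_sigma_mul_theta hij]
    _ = θB j * θB k * θB i := (commute_theta_theta hik).right_comm _
    _ = σB k * σB j * θB k * θB i := by rw [sigma_mul_sigma_mul_theta hkj]
    _ = σB k * σB j * θB i * θB k := (commute_theta_theta hik).symm.right_comm _

end DerivedRelations

end BrauerMonoid

/-- Lemma `newrellem` of Kudryavtseva–Mazorchuk: in `T`,
(i) `σ_i θ_j σ_i = σ_j θ_i σ_j` and `θ_i σ_j θ_i = θ_i` whenever `|i - j| = 1`, and
(ii) `σ_i σ_{i+1} θ_i θ_{i+2} = σ_{i+2} σ_{i+1} θ_i θ_{i+2}` for all admissible `i`. -/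
theorem brauer_derived_relations (n : ℕ) :
    (∀ i j : Fin (n - 1), Nat.dist i.1 j.1 = 1 →
      σB i * θB j * σB i = σB j * θB i * σB j ∧ θB i * σB j * θB i = θB i) ∧
    (∀ i i₁ i₂ : Fin (n - 1), i₁.1 = i.1 + 1 → i₂.1 = i.1 + 2 →
      σB i * σB i₁ * θB i * θB i₂ = σB i₂ * σB i₁ * θB i * θB i₂) := by
  refine ⟨fun i j hij => ⟨BrauerMonoid.sigma_mul_theta_mul_sigma hij,
    BrauerMonoid.theta_mul_sigma_mul_theta hij⟩, fun i i₁ i₂ h₁ h₂ => ?_⟩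
  apply BrauerMonoid.sigma_mul_sigma_mul_theta_mul_theta <;> grind [Nat.dist]
end

section
/- There exists a monoid homomorphism ψ from the symmetric group Perm(Fin n) to T sending each adjacent transposition s_i = (i, i+1) to σ_i for i = 1,…,n−1; this homomorphism is injective, and its image is exactly the group of units of T. In particular, the group of units of T is isomorphic to the symmetric group S_n. -/
/-!
The symmetric group on `n + 1` points is the Coxeter group of type `A n`. Indeed, elements
`s 0, …, s (n - 1)` of a monoid satisfying the Coxeter relations generate a submonoid with at most
`(n + 1)!` elements: by induction on `n`, every right translate of a product
`s (n - 1) * ⋯ * s k` by a generator is again such a product, up to a left factor generated by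
`s 0, …, s (n - 2)`. Hence the surjection of the Coxeter group onto the symmetric group is bijective
by counting.

Since the `σ_i` satisfy the Coxeter relations, this yields `ψ`. Sending every `θ_i` to zero and
`σ_i` to `s_i` respects the defining relations of `T`, because `θ` occurs on one side of a relation
if and only if it occurs on the other. Composing the resulting homomorphism, from `T` to the
symmetric group with a zero adjoined, with `ψ` gives the inclusion, so `ψ` is injective. This
homomorphism is nonzero on units and zero on every word containing some `θ_i`, so every unit is a
product of `σ_i`s.
-/

section Involutions

variable {M : Type*} [Monoid M] {a b : M}

theorem mul_sq_eq_one_iff_commute (ha : a * a = 1) (hb : b * b = 1) :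
    (a * b) ^ 2 = 1 ↔ Commute a b := by
  have hab : a * b * (b * a) = 1 := by rw [mul_assoc, ← mul_assoc b, hb, one_mul, ha]
  rw [sq]
  refine ⟨fun h ↦ left_inv_eq_right_inv h hab, fun h ↦ ?_⟩
  rwa [← h.eq] at hab

theorem mul_pow_three_eq_one_iff_braid (ha : a * a = 1) (hb : b * b = 1) :
    (a * b) ^ 3 = 1 ↔ a * b * a = b * a * b := by
  have hbab : b * a * b * (b * a * b) = 1 := by
    rw [mul_assoc, mul_assoc b a b, ← mul_assoc b b, hb, one_mul, mul_assoc, ← mul_assoc a a, ha,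
      one_mul, hb]
  have hpow : (a * b) ^ 3 = a * b * a * (b * a * b) := by
    simp only [pow_succ, pow_zero, one_mul, mul_assoc]
  rw [hpow]
  exact ⟨fun h ↦ left_inv_eq_right_inv h hbab, fun h ↦ by rw [h, hbab]⟩

end Involutions

section TypeA

variable {M : Type*} [Monoid M] {n : ℕ}

theorem coxeterA_apply_of_one_lt_dist {i j : Fin n} (h : 1 < Nat.dist i.1 j.1) :
    CoxeterMatrix.A n i j = 2 := by
  unfold Nat.dist at h
  simp only [CoxeterMatrix.A, Matrix.of_apply, Fin.ext_iff]
  rw [if_neg (by omega), if_neg (by omega)]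

theorem coxeterA_apply_of_dist_eq_one {i j : Fin n} (h : Nat.dist i.1 j.1 = 1) :
    CoxeterMatrix.A n i j = 3 := by
  unfold Nat.dist at h
  simp only [CoxeterMatrix.A, Matrix.of_apply, Fin.ext_iff]
  rw [if_neg (by omega), if_pos (by omega)]

theorem isLiftable_A_iff {s : Fin n → M} :
    (CoxeterMatrix.A n).IsLiftable s ↔
      (∀ i, s i * s i = 1) ∧
      (∀ i j : Fin n, 1 < Nat.dist i.1 j.1 → Commute (s i) (s j)) ∧
      (∀ i j : Fin n, Nat.dist i.1 j.1 = 1 → s i * s j * s i = s j * s i * s j) := by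
  constructor
  · intro hs
    have mul_self (i) : s i * s i = 1 := by simpa using hs i i
    refine ⟨mul_self, fun i j h ↦ ?_, fun i j h ↦ ?_⟩
    · rw [← mul_sq_eq_one_iff_commute (mul_self i) (mul_self j),
        ← coxeterA_apply_of_one_lt_dist h]
      exact hs i j
    · rw [← mul_pow_three_eq_one_iff_braid (mul_self i) (mul_self j),
        ← coxeterA_apply_of_dist_eq_one h]
      exact hs i j
  · rintro ⟨mul_self, commute, braid⟩ i j
    rcases lt_trichotomy (Nat.dist i.1 j.1) 1 with h | h | h
    · obtain rfl : i = j := Fin.ext (Nat.eq_of_dist_eq_zero (Nat.lt_one_iff.1 h))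
      rw [CoxeterMatrix.diagonal, pow_one, mul_self]
    · rw [coxeterA_apply_of_dist_eq_one h, mul_pow_three_eq_one_iff_braid (mul_self i) (mul_self j)]
      exact braid i j h
    · rw [coxeterA_apply_of_one_lt_dist h, mul_sq_eq_one_iff_commute (mul_self i) (mul_self j)]
      exact commute i j h

theorem isLiftable_A_comp_castSucc {s : Fin (n + 1) → M}
    (hs : (CoxeterMatrix.A (n + 1)).IsLiftable s) :
    (CoxeterMatrix.A n).IsLiftable (s ∘ Fin.castSucc) := by
  rw [isLiftable_A_iff] at hs ⊢
  exact ⟨fun i ↦ hs.1 _, fun i j ↦ hs.2.1 i.castSucc j.castSucc,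
    fun i j ↦ hs.2.2 i.castSucc j.castSucc⟩

/-- The product `s (n - 1) * ⋯ * s (k + 1) * s k` of a final segment of a finite sequence, in
decreasing order of the indices. When `s` satisfies the Coxeter relations of type `A`, these
products represent the right cosets of the submonoid generated by `s 0, …, s (n - 2)`. -/
def descendingProd (s : Fin n → M) : Fin (n + 1) → M :=
  Fin.reverseInduction 1 fun k d ↦ d * s k

theorem descendingProd_last (s : Fin n → M) : descendingProd s (Fin.last n) = 1 :=
  Fin.reverseInduction_last

theorem descendingProd_castSucc (s : Fin n → M) (k : Fin n) :
    descendingProd s k.castSucc = descendingProd s k.succ * s k :=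
  Fin.reverseInduction_castSucc k

theorem commute_descendingProd {s : Fin n → M} (hs : (CoxeterMatrix.A n).IsLiftable s)
    {k : Fin (n + 1)} {j : Fin n} (hjk : j.1 + 1 < k.1) :
    Commute (descendingProd s k) (s j) := by
  obtain ⟨-, commute, -⟩ := isLiftable_A_iff.1 hs
  induction k using Fin.reverseInduction with
  | last => rw [descendingProd_last]; exact Commute.one_left _
  | cast k ih =>
    rw [Fin.val_castSucc] at hjk
    rw [descendingProd_castSucc]
    exact (ih (by rw [Fin.val_succ]; omega)).mul_left
      (commute k j (by unfold Nat.dist; omega))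

theorem descendingProd_mul_succ {s : Fin (n + 1) → M}
    (hs : (CoxeterMatrix.A (n + 1)).IsLiftable s) {k : Fin (n + 2)} {j : Fin n}
    (hkj : k.1 ≤ j.1) :
    descendingProd s k * s j.succ = s j.castSucc * descendingProd s k := by
  obtain ⟨-, commute, braid⟩ := isLiftable_A_iff.1 hs
  induction k using Fin.reverseInduction with
  | last => rw [Fin.val_last] at hkj; omega
  | cast k ih =>
    rw [Fin.val_castSucc] at hkj
    rcases hkj.lt_or_eq with hlt | heq
    · have hcomm : Commute (s k) (s j.succ) :=
        commute _ _ (by rw [Fin.val_succ]; unfold Nat.dist; omega)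
      rw [descendingProd_castSucc, mul_assoc, hcomm.eq, ← mul_assoc, ih hlt, mul_assoc]
    · obtain rfl : k = j.castSucc := Fin.ext heq
      have hcomm : Commute (descendingProd s j.succ.succ) (s j.castSucc) :=
        commute_descendingProd hs (by simp)
      calc descendingProd s j.castSucc.castSucc * s j.succ
          = descendingProd s j.succ.succ * (s j.succ * s j.castSucc * s j.succ) := by
            rw [descendingProd_castSucc, Fin.succ_castSucc, descendingProd_castSucc]
            simp only [mul_assoc]
        _ = descendingProd s j.succ.succ * (s j.castSucc * s j.succ * s j.castSucc) := by
            rw [braid j.succ j.castSucc (by simp [Nat.dist])]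
        _ = s j.castSucc * descendingProd s j.castSucc.castSucc := by
            rw [descendingProd_castSucc, Fin.succ_castSucc, descendingProd_castSucc, mul_assoc,
              ← mul_assoc, hcomm.eq]
            simp only [mul_assoc]

theorem exists_descendingProd_mul_eq {s : Fin (n + 1) → M}
    (hs : (CoxeterMatrix.A (n + 1)).IsLiftable s) (k : Fin (n + 2)) (j : Fin (n + 1)) :
    ∃ a ∈ Submonoid.closure (Set.range (s ∘ Fin.castSucc)), ∃ l,
      descendingProd s k * s j = a * descendingProd s l := by
  have mem_closure (i : Fin n) :
      s i.castSucc ∈ Submonoid.closure (Set.range (s ∘ Fin.castSucc)) :=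
    Submonoid.subset_closure ⟨i, rfl⟩
  rcases lt_trichotomy k j.castSucc with hkj | rfl | hjk
  · have hj : j ≠ 0 := by
      rintro rfl
      exact Fin.not_lt_zero k hkj
    obtain ⟨i, rfl⟩ := Fin.exists_succ_eq.2 hj
    rw [Fin.lt_def, Fin.val_castSucc, Fin.val_succ, Nat.lt_succ_iff] at hkj
    exact ⟨_, mem_closure i, k, descendingProd_mul_succ hs hkj⟩
  · refine ⟨1, one_mem _, j.succ, ?_⟩
    rw [descendingProd_castSucc, mul_assoc, (isLiftable_A_iff.1 hs).1, mul_one, one_mul]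
  · rw [Fin.lt_def, Fin.val_castSucc] at hjk
    rcases (Nat.succ_le_of_lt hjk).lt_or_eq with hlt | heq
    · have hj : j ≠ Fin.last n := by
        rintro rfl
        exact hlt.not_ge (Nat.lt_succ_iff.1 k.is_lt)
      obtain ⟨i, rfl⟩ := Fin.exists_castSucc_eq.2 hj
      exact ⟨_, mem_closure i, k, (commute_descendingProd hs hlt).eq⟩
    · obtain rfl : k = j.succ := Fin.ext heq.symm
      exact ⟨1, one_mem _, j.castSucc, by rw [descendingProd_castSucc, one_mul]⟩

open scoped Pointwise in
theorem closure_range_subset_mul_range_descendingProd {s : Fin (n + 1) → M}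
    (hs : (CoxeterMatrix.A (n + 1)).IsLiftable s) :
    (Submonoid.closure (Set.range s) : Set M) ⊆
      (Submonoid.closure (Set.range (s ∘ Fin.castSucc)) : Set M) *
        Set.range (descendingProd s) := by
  intro x hx
  induction hx using Submonoid.closure_induction_right with
  | one => exact ⟨1, one_mem _, 1, ⟨Fin.last _, descendingProd_last s⟩, one_mul 1⟩
  | mul_right x _ y hy ih =>
    obtain ⟨j, rfl⟩ := hy
    obtain ⟨a, ha, _, ⟨k, rfl⟩, rfl⟩ := ih
    obtain ⟨b, hb, l, hl⟩ := exists_descendingProd_mul_eq hs k j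
    exact ⟨a * b, mul_mem ha hb, _, ⟨l, rfl⟩, by simp only [mul_assoc, hl]⟩

open scoped Nat in
theorem encard_closure_range_le_factorial {s : Fin n → M}
    (hs : (CoxeterMatrix.A n).IsLiftable s) :
    (Submonoid.closure (Set.range s) : Set M).encard ≤ (n + 1)! := by
  induction n with
  | zero => simp [Set.range_eq_empty]
  | succ n ih =>
    have card_range : (Set.range (descendingProd s)).encard ≤ (n + 2 : ℕ) := by
      rw [← Set.image_univ]
      refine (Set.encard_image_le _ _).trans_eq ?_
      rw [Set.encard_univ, ENat.card_eq_coe_fintype_card, Fintype.card_fin]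
    refine (Set.encard_le_encard (closure_range_subset_mul_range_descendingProd hs)).trans ?_
    rw [← Set.image_mul_prod]
    refine (Set.encard_image_le _ _).trans ?_
    rw [Set.encard_prod, Nat.factorial_succ (n + 1), mul_comm, Nat.cast_mul]
    exact mul_le_mul' card_range (ih (isLiftable_A_comp_castSucc hs))

end TypeA

section SymmetricGroup

open Equiv

theorem swap_mul_swap_mul_swap_braid {α : Type*} [DecidableEq α] {a b c : α} (hab : a ≠ b)
    (hac : a ≠ c) (hbc : b ≠ c) :
    swap a b * swap b c * swap a b = swap b c * swap a b * swap b c := by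
  rw [swap_mul_swap_mul_swap hab hac, swap_comm a b, swap_comm b c,
    swap_mul_swap_mul_swap hbc.symm hac.symm, swap_comm]

theorem isLiftable_A_swap (n : ℕ) :
    (CoxeterMatrix.A n).IsLiftable fun i : Fin n ↦ swap i.castSucc i.succ := by
  have braid (i j : Fin n) (h : i.1 + 1 = j.1) :
      swap i.castSucc i.succ * swap j.castSucc j.succ * swap i.castSucc i.succ =
        swap j.castSucc j.succ * swap i.castSucc i.succ * swap j.castSucc j.succ := by
    rw [show j.castSucc = i.succ from Fin.ext h.symm]
    apply swap_mul_swap_mul_swap_braid <;>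
      simp only [ne_eq, Fin.ext_iff, Fin.val_castSucc, Fin.val_succ] <;> omega
  refine isLiftable_A_iff.2 ⟨fun i ↦ swap_mul_self _ _, fun i j h ↦ ?_, fun i j h ↦ ?_⟩
  · unfold Nat.dist at h
    refine (Perm.disjoint_swap_swap ?_).commute
    simp only [List.nodup_cons, List.mem_cons, List.not_mem_nil, List.nodup_nil, or_false,
      not_false_eq_true, and_true, Fin.ext_iff, Fin.val_castSucc, Fin.val_succ]
    omega
  · unfold Nat.dist at h
    rcases (show i.1 + 1 = j.1 ∨ j.1 + 1 = i.1 by omega) with hij | hji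
    · exact braid i j hij
    · exact (braid j i hji).symm

/-- The homomorphism from the Coxeter group of type `A n` onto the symmetric group, sending simple
reflections to adjacent transpositions. -/
def coxeterGroupToPerm (n : ℕ) : (CoxeterMatrix.A n).Group →* Perm (Fin (n + 1)) :=
  (CoxeterMatrix.A n).toCoxeterSystem.lift ⟨_, isLiftable_A_swap n⟩

theorem coxeterGroupToPerm_simple {n : ℕ} (i : Fin n) :
    coxeterGroupToPerm n ((CoxeterMatrix.A n).simple i) = swap i.castSucc i.succ :=
  (CoxeterMatrix.A n).toCoxeterSystem.lift_apply_simple (isLiftable_A_swap n) i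

theorem coxeterGroupToPerm_surjective (n : ℕ) :
    Function.Surjective (coxeterGroupToPerm n) := by
  rw [← MonoidHom.mrange_eq_top, eq_top_iff, ← Perm.mclosure_swap_castSucc_succ,
    Submonoid.closure_le]
  rintro _ ⟨i, rfl⟩
  exact ⟨_, coxeterGroupToPerm_simple i⟩

open scoped Nat in
theorem encard_univ_coxeterGroup_A_le (n : ℕ) :
    (Set.univ : Set (CoxeterMatrix.A n).Group).encard ≤ (n + 1)! := by
  let cs := (CoxeterMatrix.A n).toCoxeterSystem
  have h := encard_closure_range_le_factorial (s := cs.simple) cs.simple_mul_simple_pow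
  rwa [cs.submonoid_closure_range_simple, Submonoid.coe_top] at h

theorem coxeterGroupToPerm_bijective (n : ℕ) :
    Function.Bijective (coxeterGroupToPerm n) := by
  have card_le := encard_univ_coxeterGroup_A_le n
  have : Finite (CoxeterMatrix.A n).Group :=
    Set.finite_univ_iff.1 (Set.finite_of_encard_le_coe card_le)
  refine (coxeterGroupToPerm_surjective n).bijective_of_nat_card_le ?_
  rw [Nat.card_perm, Nat.card_fin, ← Set.ncard_univ]
  exact ENat.toNat_le_of_le_natCast card_le

/-- The symmetric group on `n + 1` points as a Coxeter group of type `A n`, with the adjacent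
transpositions as simple reflections. -/
noncomputable def permCoxeterSystem (n : ℕ) :
    CoxeterSystem (CoxeterMatrix.A n) (Perm (Fin (n + 1))) where
  mulEquiv := (MulEquiv.ofBijective _ (coxeterGroupToPerm_bijective n)).symm

theorem permCoxeterSystem_simple {n : ℕ} (i : Fin n) :
    (permCoxeterSystem n).simple i = swap i.castSucc i.succ :=
  coxeterGroupToPerm_simple i

theorem isLiftable_A_sPerm (n : ℕ) : (CoxeterMatrix.A (n - 1)).IsLiftable (sPerm (n := n)) := by
  cases n with
  | zero => exact fun i ↦ i.elim0
  | succ n => exact isLiftable_A_swap n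

end SymmetricGroup

namespace BrauerMonoid

variable {n : ℕ}

theorem isLiftable_A_σB (n : ℕ) : (CoxeterMatrix.A (n - 1)).IsLiftable (σB (n := n)) :=
  isLiftable_A_iff.2
    ⟨fun i ↦ PresentedMonoid.mk_eq_mk_of_rel (.sigma_sq i),
      fun i j h ↦ PresentedMonoid.mk_eq_mk_of_rel (.sigma_comm i j h),
      fun i j h ↦ PresentedMonoid.mk_eq_mk_of_rel (.braid i j h)⟩

/-- The images of the generators under `toPermWithZero`. -/
def genToPermWithZero : BrauerGen n → WithZero (Equiv.Perm (Fin n)) :=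
  Sum.elim (fun i ↦ sPerm i) fun _ ↦ 0

theorem lift_genToPermWithZero_eq_of_rel (v w : FreeMonoid (BrauerGen n)) (h : BrauerRel n v w) :
    FreeMonoid.lift genToPermWithZero v = FreeMonoid.lift genToPermWithZero w := by
  obtain ⟨mul_self, commute, braid⟩ := isLiftable_A_iff.1 (isLiftable_A_sPerm n)
  cases h <;> simp only [fσ, fθ, map_mul, map_one, FreeMonoid.lift_eval_of, genToPermWithZero,
    Sum.elim_inl, Sum.elim_inr, mul_zero, zero_mul, ← WithZero.coe_mul]
  case sigma_sq i => rw [mul_self, WithZero.coe_one]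
  case sigma_comm i j h => rw [(commute i j h).eq]
  case braid i j h => rw [braid i j h]

/-- The homomorphism from `T` to the symmetric group with a zero adjoined, sending `σ_i` to the
adjacent transposition `s_i` and `θ_i` to zero. -/
def toPermWithZero (n : ℕ) : BrauerMonoid n →* WithZero (Equiv.Perm (Fin n)) :=
  PresentedMonoid.lift genToPermWithZero lift_genToPermWithZero_eq_of_rel

theorem toPermWithZero_σB (i : Fin (n - 1)) : toPermWithZero n (σB i) = sPerm i := rfl

theorem toPermWithZero_θB (i : Fin (n - 1)) : toPermWithZero n (θB i) = 0 := rfl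

theorem mem_closure_range_σB_of_toPermWithZero_ne_zero {x : BrauerMonoid n}
    (hx : toPermWithZero n x ≠ 0) : x ∈ Submonoid.closure (Set.range (σB (n := n))) := by
  have mem_closure : x ∈ Submonoid.closure (Set.range (PresentedMonoid.of (BrauerRel n))) := by
    rw [PresentedMonoid.closure_range_of]
    exact Submonoid.mem_top x
  induction mem_closure using Submonoid.closure_induction with
  | mem _ h =>
    obtain ⟨i | i, rfl⟩ := h
    · exact Submonoid.subset_closure ⟨i, rfl⟩
    · exact absurd (toPermWithZero_θB i) hx
  | one => exact one_mem _
  | mul x y _ _ ihx ihy =>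
    rw [map_mul] at hx
    exact mul_mem (ihx (left_ne_zero_of_mul hx)) (ihy (right_ne_zero_of_mul hx))

theorem mem_closure_range_σB_of_isUnit {x : BrauerMonoid n} (hx : IsUnit x) :
    x ∈ Submonoid.closure (Set.range (σB (n := n))) :=
  mem_closure_range_σB_of_toPermWithZero_ne_zero (hx.map (toPermWithZero n)).ne_zero

/-- The homomorphism `ψ` from the symmetric group to `T` sending each adjacent transposition `s_i`
to `σ_i`. It lives on `n + 1` points so that `s_1, …, s_n` are the simple reflections of
`permCoxeterSystem n`. -/
noncomputable def ofPerm (n : ℕ) : Equiv.Perm (Fin (n + 1)) →* BrauerMonoid (n + 1) :=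
  (permCoxeterSystem n).lift ⟨σB (n := n + 1), isLiftable_A_σB (n + 1)⟩

theorem ofPerm_sPerm (i : Fin (n + 1 - 1)) : ofPerm n (sPerm i) = σB i := by
  rw [show sPerm i = (permCoxeterSystem n).simple i from (permCoxeterSystem_simple i).symm]
  exact (permCoxeterSystem n).lift_apply_simple (isLiftable_A_σB (n + 1)) i

theorem toPermWithZero_ofPerm (p : Equiv.Perm (Fin (n + 1))) :
    toPermWithZero (n + 1) (ofPerm n p) = p := by
  suffices h : (toPermWithZero (n + 1)).comp (ofPerm n) = WithZero.coeMonoidHom from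
    DFunLike.congr_fun h p
  refine (permCoxeterSystem n).ext_simple fun i ↦ ?_
  rw [permCoxeterSystem_simple]
  calc toPermWithZero (n + 1) (ofPerm n (sPerm (n := n + 1) i))
      = toPermWithZero (n + 1) (σB (n := n + 1) i) := by rw [ofPerm_sPerm]
    _ = sPerm (n := n + 1) i := toPermWithZero_σB (n := n + 1) i

theorem ofPerm_injective (n : ℕ) : Function.Injective (ofPerm n) := fun p q h ↦
  WithZero.coe_injective <| by rw [← toPermWithZero_ofPerm, h, toPermWithZero_ofPerm]

theorem range_ofPerm (n : ℕ) : Set.range (ofPerm n) = {x | IsUnit x} := by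
  refine Set.Subset.antisymm ?_ fun x hx ↦ ?_
  · rintro _ ⟨p, rfl⟩
    exact (Group.isUnit p).map (ofPerm n)
  · have closure_le : Submonoid.closure (Set.range σB) ≤ MonoidHom.mrange (ofPerm n) := by
      rw [Submonoid.closure_le]
      rintro _ ⟨i, rfl⟩
      exact ⟨sPerm i, ofPerm_sPerm i⟩
    exact closure_le (mem_closure_range_σB_of_isUnit hx)

end BrauerMonoid

/-- Lemma `lemma301` of Kudryavtseva–Mazorchuk: there is a monoid homomorphism
`ψ : S_n → T` with `ψ(s_i) = σ_i`; it is injective and its image is exactly the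
group of units of `T`.  In particular the group of units of `T` is isomorphic to `S_n`. -/
theorem brauer_units (n : ℕ) (hn : 1 ≤ n) :
    ∃ ψ : Equiv.Perm (Fin n) →* BrauerMonoid n,
      (∀ i : Fin (n - 1), ψ (sPerm i) = σB i) ∧
      Function.Injective ψ ∧
      Set.range ψ = {x : BrauerMonoid n | IsUnit x} := by
  obtain ⟨n, rfl⟩ := Nat.exists_eq_add_of_le' hn
  exact ⟨BrauerMonoid.ofPerm n, BrauerMonoid.ofPerm_sPerm, BrauerMonoid.ofPerm_injective n,
    BrauerMonoid.range_ofPerm n⟩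
end

section
/- Let ψ : Perm(Fin n) → T be the monoid homomorphism with ψ(s_i) = σ_i for all adjacent transpositions s_i. Then for every permutation w and every i ∈ {1,…,n−1}, one has ψ(w⁻¹)·θ_1·ψ(w) = θ_i if and only if w maps the set {1,2} onto the set {i, i+1}. -/
/-!
Write `arc i = {i, i + 1}`, with indices and points counted from `0`. Let `σ_i` act on subsets of
`Fin n` by permuting points, and let `θ_i` send each set meeting `arc i` to `arc i` and every other
set to `∅`; this respects the defining relations. In this representation `ψ w * θ_i = θ_j * ψ w`
forces `w` to carry `arc i` onto `arc j`.

Conversely, `σ_i * σ_j` conjugates `θ_i` to `θ_j` when `|i - j| = 1`, so all `θ_i` are conjugate and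
it remains to treat a permutation stabilising `arc 0`. It is a product of transpositions that do not
mix `arc 0` with its complement. Each of these is either `s_0` or a product of adjacent
transpositions `s_k` with `k ≥ 2`, because the complement of `arc 0` is an interval, and all of
these `s_k` are sent to elements commuting with `θ_0`.
-/

open Equiv MulAction
open scoped Pointwise

section Conjugation

variable {G M : Type*} [Group G] [Monoid M] (ψ : G →* M) {g : G} {x y : M}

theorem semiconjBy_map_inv (h : SemiconjBy (ψ g) x y) : SemiconjBy (ψ g⁻¹) y x :=
  SemiconjBy.units_inv_symm_left (a := ψ.toHomUnits g) h

theorem map_mul_mul_map_inv_eq_iff : ψ g * x * ψ g⁻¹ = y ↔ SemiconjBy (ψ g) x y :=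
  Units.mul_inv_eq_iff_eq_mul (ψ.toHomUnits g)

/-- The subgroup of those `g : G` whose image under `ψ` commutes with `x`. It plays the role of the
stabiliser of `x` under conjugation; `M` is only a monoid, so this is not a comap of
`Subgroup.centralizer`. -/
def mapCentralizer (x : M) : Subgroup G where
  carrier := {g | Commute (ψ g) x}
  mul_mem' hg hh := by simpa only [Set.mem_ofPred_eq, map_mul] using hg.mul_left hh
  one_mem' := by simp only [Set.mem_ofPred_eq, map_one, Commute.one_left]
  inv_mem' := semiconjBy_map_inv ψ

end Conjugation

theorem mem_of_forall_swap_apply_mem {α : Type*} [Finite α] [DecidableEq α]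
    (H : Subgroup (Perm α)) {f : Perm α} (h : ∀ x, swap x (f x) ∈ H) : f ∈ H := by
  let S : Set (Perm α) := {s | s ∈ H ∧ s.IsSwap}
  have hS : Subgroup.closure S ≤ H := (Subgroup.closure_le H).2 fun s hs => hs.1
  refine hS ((mem_closure_isSwap fun s hs => hs.2).2 ⟨Set.toFinite _, fun x => ?_⟩)
  refine ⟨⟨swap x (f x), ?_⟩, swap_apply_left x (f x)⟩
  obtain hx | hx := eq_or_ne x (f x)
  · rw [← hx, swap_self]
    exact one_mem _
  · exact Subgroup.subset_closure ⟨h x, x, f x, hx, rfl⟩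

section RankOneMap

variable {α : Type*} {p q p₁ q₁ : Set α}

/-- The Boolean rank-one operator `p qᵀ` on subsets: it sends the sets meeting `q` to `p` and
all other sets to `∅`. -/
def rankOneMap (p q : Set α) : Function.End (Set α) :=
  fun A => {x ∈ p | (q ∩ A).Nonempty}

theorem rankOneMap_mul_of_nonempty (h : (q ∩ p₁).Nonempty) :
    rankOneMap p q * rankOneMap p₁ q₁ = rankOneMap p q₁ := by
  obtain ⟨z, hzq, hzp₁⟩ := h
  funext A
  ext x
  exact ⟨fun ⟨hx, _, _, _, hA⟩ => ⟨hx, hA⟩, fun ⟨hx, hA⟩ => ⟨hx, z, hzq, hzp₁, hA⟩⟩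

theorem rankOneMap_mul_of_disjoint (h : Disjoint q p₁) :
    rankOneMap p q * rankOneMap p₁ q₁ = fun _ => ∅ := by
  funext A
  refine Set.eq_empty_of_forall_notMem ?_
  rintro x ⟨-, z, hzq, hzp₁, -⟩
  exact h.notMem_of_mem_left hzq hzp₁

theorem eq_of_rankOneMap_eq (hq : q.Nonempty) (hq₁ : q₁.Nonempty)
    (h : rankOneMap p q = rankOneMap p₁ q₁) : p = p₁ := by
  simpa [rankOneMap, hq, hq₁] using congrFun h Set.univ

variable {G : Type*} [Group G] [MulAction G α]

theorem toEndHom_mul_rankOneMap (g : G) :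
    toEndHom g * rankOneMap p q = rankOneMap (g • p) q := by
  funext A
  ext x
  change x ∈ g • rankOneMap p q A ↔ _
  simp only [rankOneMap, Set.mem_smul_set_iff_inv_smul_mem, Set.mem_ofPred_eq]

theorem rankOneMap_mul_toEndHom (g : G) :
    rankOneMap p q * toEndHom g = rankOneMap p (g⁻¹ • q) := by
  funext A
  have hA : (q ∩ g • A).Nonempty ↔ (g⁻¹ • q ∩ A).Nonempty := by
    rw [← Set.smul_set_nonempty (a := g⁻¹), Set.smul_set_inter, inv_smul_smul]
  ext x
  exact and_congr_right fun _ => hA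

end RankOneMap

section AdjacentTranspositions

variable {n : ℕ} {i j : Fin (n - 1)}

theorem lo_lt_hi (i : Fin (n - 1)) : lo i < hi i := Nat.lt_succ_self i

theorem mclosure_range_sPerm (n : ℕ) :
    Submonoid.closure (Set.range (sPerm (n := n))) = ⊤ := by
  cases n with
  | zero => exact Subsingleton.elim _ _
  | succ m => exact Perm.mclosure_swap_castSucc_succ m

theorem sPerm_mul_self (i : Fin (n - 1)) : sPerm i * sPerm i = 1 := swap_mul_self _ _

theorem sPerm_inv (i : Fin (n - 1)) : (sPerm i)⁻¹ = sPerm i := swap_inv _ _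

theorem swap_mem_of_forall_sPerm_mem (M : Submonoid (Perm (Fin n))) {a b : Fin n} (hab : a ≤ b)
    (h : ∀ i, a ≤ lo i → sPerm i ∈ M) : swap a b ∈ M := by
  obtain ⟨b, hb⟩ := b
  induction b, (show a.1 ≤ b from hab) using Nat.le_induction with
  | base => exact swap_self a ▸ one_mem M
  | succ m ham ih =>
    exact SubmonoidClass.swap_mem_trans M (ih (by omega) ham) (h ⟨m, by omega⟩ ham)

/-- The block `{i, i + 1}` of the partition of `{1, …, n}` defined by `θ_i`. -/
def arc (i : Fin (n - 1)) : Set (Fin n) := {lo i, hi i}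

theorem arc_nonempty (i : Fin (n - 1)) : (arc i).Nonempty := Set.insert_nonempty _ _

theorem smul_arc (w : Perm (Fin n)) (i : Fin (n - 1)) : w • arc i = {w (lo i), w (hi i)} := by
  simp only [arc, Set.smul_set_insert, Set.smul_set_singleton, Perm.smul_def]

theorem sPerm_smul_arc_self (i : Fin (n - 1)) : sPerm i • arc i = arc i := by
  rw [smul_arc, sPerm, swap_apply_left, swap_apply_right, Set.pair_comm, arc]

theorem swap_eq_one_or_eq_sPerm {a b : Fin n} (ha : a ∈ arc i) (hb : b ∈ arc i) :
    swap a b = 1 ∨ swap a b = sPerm i := by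
  obtain rfl | rfl := ha <;> obtain rfl | rfl := hb
  · exact .inl (swap_self _)
  · exact .inr rfl
  · exact .inr (swap_comm _ _)
  · exact .inl (swap_self _)

theorem disjoint_arc (h : 1 < Nat.dist i j) : Disjoint (arc i) (arc j) := by
  simp only [arc, Set.disjoint_insert_left, Set.disjoint_singleton_left, Set.mem_insert_iff,
    Set.mem_singleton_iff, lo, hi, Fin.ext_iff, Nat.dist] at *
  omega

theorem sPerm_apply_of_mem_arc (h : 1 < Nat.dist i j) {a : Fin n} (ha : a ∈ arc i) :
    sPerm j a = a := by
  have haj : a ∉ arc j := (disjoint_arc h).notMem_of_mem_left ha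
  exact swap_apply_of_ne_of_ne (fun e => haj (.inl e)) (fun e => haj (.inr e))

theorem sPerm_smul_arc_of_one_lt_dist (h : 1 < Nat.dist i j) : sPerm j • arc i = arc i := by
  rw [smul_arc, sPerm_apply_of_mem_arc h (.inl rfl), sPerm_apply_of_mem_arc h (.inr rfl), arc]

theorem sPerm_mul_comm (h : 1 < Nat.dist i j) : sPerm i * sPerm j = sPerm j * sPerm i := by
  have hconj : sPerm j * swap (lo i) (hi i) * (sPerm j)⁻¹ = sPerm i := by
    rw [← swap_apply_apply, sPerm_apply_of_mem_arc h (.inl rfl),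
      sPerm_apply_of_mem_arc h (.inr rfl), sPerm]
  exact (mul_inv_eq_iff_eq_mul.1 hconj).symm

theorem arc_inter_arc_nonempty (h : Nat.dist i j = 1) : (arc i ∩ arc j).Nonempty := by
  obtain e | e : hi i = lo j ∨ hi j = lo i := by
    simp only [lo, hi, Fin.ext_iff, Nat.dist] at *
    omega
  · exact ⟨hi i, .inr rfl, .inl e⟩
  · exact ⟨lo i, .inl rfl, .inr e.symm⟩

theorem sPerm_apply_lo_hi_comm (h : Nat.dist i j = 1) :
    sPerm i (lo j) = sPerm j (lo i) ∧ sPerm i (hi j) = sPerm j (hi i) := by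
  wlog e : hi i = lo j generalizing i j
  · have e' : hi j = lo i := by
      simp only [lo, hi, Fin.ext_iff, Nat.dist] at *
      omega
    have hji := this (Nat.dist_comm j i ▸ h) e'
    exact ⟨hji.1.symm, hji.2.symm⟩
  have hlo : sPerm j (lo i) = lo i :=
    swap_apply_of_ne_of_ne (e ▸ (lo_lt_hi i).ne) ((lo_lt_hi i).trans (e ▸ lo_lt_hi j)).ne
  have hhi : sPerm i (hi j) = hi j :=
    swap_apply_of_ne_of_ne ((lo_lt_hi i).trans (e ▸ lo_lt_hi j)).ne' (e ▸ (lo_lt_hi j).ne')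
  constructor
  · rw [hlo, ← e, sPerm, swap_apply_right]
  · rw [hhi, e, sPerm, swap_apply_left]

theorem sPerm_smul_arc_comm (h : Nat.dist i j = 1) : sPerm i • arc j = sPerm j • arc i := by
  rw [smul_arc, smul_arc, (sPerm_apply_lo_hi_comm h).1, (sPerm_apply_lo_hi_comm h).2]

theorem sPerm_mul_sPerm_smul_arc (h : Nat.dist i j = 1) :
    (sPerm i * sPerm j) • arc i = arc j := by
  rw [mul_smul, ← sPerm_smul_arc_comm h, ← mul_smul, sPerm_mul_self, one_smul]

theorem sPerm_braid (h : Nat.dist i j = 1) :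
    sPerm i * sPerm j * sPerm i = sPerm j * sPerm i * sPerm j := by
  have hconj (k l : Fin (n - 1)) :
      sPerm k * sPerm l * sPerm k = swap (sPerm k (lo l)) (sPerm k (hi l)) := by
    rw [swap_apply_apply, sPerm_inv, ← sPerm]
  rw [hconj, hconj, (sPerm_apply_lo_hi_comm h).1, (sPerm_apply_lo_hi_comm h).2]

end AdjacentTranspositions

section SetRepresentation

variable {n : ℕ}

/-- The action of the generators of the Brauer monoid on subsets of `{1, …, n}`: `σ_i` permutes
points, and `θ_i` sends the sets meeting `arc i` to `arc i` and all others to `∅`. -/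
def setRepGen : BrauerGen n → Function.End (Set (Fin n)) :=
  Sum.elim (fun i => toEndHom (sPerm i)) (fun i => rankOneMap (arc i) (arc i))

theorem lift_setRepGen_eq_of_brauerRel (a b : FreeMonoid (BrauerGen n)) (hab : BrauerRel n a b) :
    FreeMonoid.lift setRepGen a = FreeMonoid.lift setRepGen b := by
  cases hab <;>
    simp only [fσ, fθ, setRepGen, map_mul, map_one, FreeMonoid.lift_eval_of, Sum.elim_inl,
      Sum.elim_inr]
  case sigma_sq i => rw [← map_mul, sPerm_mul_self, map_one]
  case sigma_comm i j h => rw [← map_mul, sPerm_mul_comm h, map_mul]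
  case braid i j h => simp only [← map_mul, sPerm_braid h]
  case theta_idem i =>
    exact rankOneMap_mul_of_nonempty ((Set.inter_self (arc i)).symm ▸ arc_nonempty i)
  case theta_comm i j h =>
    rw [rankOneMap_mul_of_disjoint (disjoint_arc h),
      rankOneMap_mul_of_disjoint (disjoint_arc h).symm]
  case theta_theta_theta i j h =>
    have hji : Nat.dist j i = 1 := Nat.dist_comm i j ▸ h
    rw [rankOneMap_mul_of_nonempty (arc_inter_arc_nonempty h),
      rankOneMap_mul_of_nonempty (arc_inter_arc_nonempty hji)]
  case theta_sigma i => rw [rankOneMap_mul_toEndHom, sPerm_inv, sPerm_smul_arc_self]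
  case sigma_theta i => rw [toEndHom_mul_rankOneMap, sPerm_smul_arc_self]
  case theta_sigma_comm i j h =>
    rw [rankOneMap_mul_toEndHom, toEndHom_mul_rankOneMap, sPerm_inv,
      sPerm_smul_arc_of_one_lt_dist h]
  case sigma_theta_theta i j h =>
    have hji : Nat.dist j i = 1 := Nat.dist_comm i j ▸ h
    rw [mul_assoc, rankOneMap_mul_of_nonempty (arc_inter_arc_nonempty hji),
      toEndHom_mul_rankOneMap, toEndHom_mul_rankOneMap, sPerm_smul_arc_comm h]
  case theta_theta_sigma i j h =>
    rw [rankOneMap_mul_of_nonempty (arc_inter_arc_nonempty h), rankOneMap_mul_toEndHom,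
      rankOneMap_mul_toEndHom, sPerm_inv, sPerm_inv, sPerm_smul_arc_comm h]

/-- The representation of the Brauer monoid on subsets of `{1, …, n}` extending `setRepGen`. It
detects the block `arc i` of `θ_i`. -/
def setRep (n : ℕ) : BrauerMonoid n →* Function.End (Set (Fin n)) :=
  PresentedMonoid.lift setRepGen lift_setRepGen_eq_of_brauerRel

theorem setRep_θB (i : Fin (n - 1)) : setRep n (θB i) = rankOneMap (arc i) (arc i) := rfl

theorem setRep_comp_eq_toEndHom {ψ : Perm (Fin n) →* BrauerMonoid n}
    (hψ : ∀ i, ψ (sPerm i) = σB i) : (setRep n).comp ψ = toEndHom := by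
  refine MonoidHom.eq_of_eqOn_denseM (mclosure_range_sPerm n) ?_
  rintro _ ⟨i, rfl⟩
  exact congrArg (setRep n) (hψ i)

end SetRepresentation

section Relations

variable {n : ℕ} {i j : Fin (n - 1)}

theorem mk_eq_mk_of_brauerRel {a b : FreeMonoid (BrauerGen n)} (h : BrauerRel n a b) :
    PresentedMonoid.mk (BrauerRel n) a = PresentedMonoid.mk (BrauerRel n) b :=
  (Con.eq _).2 (ConGen.Rel.of _ _ h)

theorem σB_mul_self (i : Fin (n - 1)) : σB i * σB i = 1 :=
  mk_eq_mk_of_brauerRel (.sigma_sq i)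

theorem commute_σB_θB_self (i : Fin (n - 1)) : Commute (σB i) (θB i) :=
  mk_eq_mk_of_brauerRel (.sigma_theta i) |>.trans (mk_eq_mk_of_brauerRel (.theta_sigma i)).symm

theorem commute_σB_θB (h : 1 < Nat.dist i j) : Commute (σB j) (θB i) :=
  (mk_eq_mk_of_brauerRel (.theta_sigma_comm i j h)).symm

theorem σB_mul_θB_mul_θB (h : Nat.dist i j = 1) : σB i * θB j * θB i = σB j * θB i :=
  mk_eq_mk_of_brauerRel (.sigma_theta_theta i j h)

theorem θB_mul_θB_mul_σB (h : Nat.dist i j = 1) : θB i * θB j * σB i = θB i * σB j :=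
  mk_eq_mk_of_brauerRel (.theta_theta_sigma i j h)

theorem semiconjBy_σB_mul_σB (h : Nat.dist i j = 1) :
    SemiconjBy (σB i * σB j) (θB i) (θB j) :=
  calc σB i * σB j * θB i
      = σB i * σB i * θB j * θB i := by
        simp only [mul_assoc, ← σB_mul_θB_mul_θB h]
    _ = θB j * θB i * (σB j * σB j) := by
        simp only [σB_mul_self, one_mul, mul_one]
    _ = θB j * (σB i * σB j) := by
        rw [← mul_assoc, θB_mul_θB_mul_σB (Nat.dist_comm i j ▸ h), mul_assoc]

end Relations

section Conjugacy

variable {n : ℕ} {ψ : Perm (Fin n) →* BrauerMonoid n}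

theorem smul_arc_eq_of_semiconjBy (hψ : ∀ i, ψ (sPerm i) = σB i) {w : Perm (Fin n)}
    {i j : Fin (n - 1)} (h : SemiconjBy (ψ w) (θB i) (θB j)) : w • arc i = arc j := by
  have hrep : setRep n (ψ w) = toEndHom w := DFunLike.congr_fun (setRep_comp_eq_toEndHom hψ) w
  have hmap : rankOneMap (w • arc i) (arc i) = rankOneMap (arc j) (w⁻¹ • arc j) := by
    simpa only [hrep, setRep_θB, toEndHom_mul_rankOneMap, rankOneMap_mul_toEndHom]
      using (h.map (setRep n)).eq
  exact eq_of_rankOneMap_eq (arc_nonempty i) (arc_nonempty j).smul_set hmap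

theorem exists_smul_arc_eq_and_semiconjBy (hψ : ∀ i, ψ (sPerm i) = σB i) {i j : Fin (n - 1)}
    (hij : i ≤ j) : ∃ c, c • arc i = arc j ∧ SemiconjBy (ψ c) (θB i) (θB j) := by
  obtain ⟨j, hj⟩ := j
  induction j, (show i.1 ≤ j from hij) using Nat.le_induction with
  | base => exact ⟨1, one_smul _ _, map_one ψ ▸ SemiconjBy.one_left _⟩
  | succ m him ih =>
    obtain ⟨c, harc, hθ⟩ := ih (by omega) him
    let k : Fin (n - 1) := ⟨m, by omega⟩
    let l : Fin (n - 1) := ⟨m + 1, hj⟩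
    have hkl : Nat.dist k l = 1 := by simp [k, l, Nat.dist]
    refine ⟨sPerm k * sPerm l * c, ?_, ?_⟩
    · rw [mul_smul, harc, sPerm_mul_sPerm_smul_arc hkl]
    · rw [map_mul, map_mul, hψ, hψ]
      exact (semiconjBy_σB_mul_σB hkl).mul_left hθ

theorem swap_mem_mapCentralizer_of_mem_arc (hψ : ∀ i, ψ (sPerm i) = σB i) {i : Fin (n - 1)}
    {a b : Fin n} (ha : a ∈ arc i) (hb : b ∈ arc i) : swap a b ∈ mapCentralizer ψ (θB i) := by
  obtain h | h := swap_eq_one_or_eq_sPerm ha hb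
  · exact h ▸ one_mem _
  · change Commute (ψ (swap a b)) (θB i)
    rw [h, hψ]
    exact commute_σB_θB_self i

theorem swap_mem_mapCentralizer_of_hi_lt (hψ : ∀ i, ψ (sPerm i) = σB i) {i : Fin (n - 1)}
    {a b : Fin n} (ha : hi i < a) (hb : hi i < b) : swap a b ∈ mapCentralizer ψ (θB i) := by
  wlog hab : a ≤ b generalizing a b
  · exact swap_comm a b ▸ this hb ha (le_of_not_ge hab)
  refine swap_mem_of_forall_sPerm_mem (mapCentralizer ψ (θB i)).toSubmonoid hab fun k hak => ?_
  have hik : i.1 + 1 < k.1 := ha.trans_le hak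
  change Commute (ψ (sPerm k)) (θB i)
  rw [hψ]
  exact commute_σB_θB (by rw [Nat.dist_eq_sub_of_le] <;> omega)

theorem commute_of_smul_arc_eq_self (hψ : ∀ i, ψ (sPerm i) = σB i) {i : Fin (n - 1)}
    (hi₀ : i.1 = 0) {u : Perm (Fin n)} (hu : u • arc i = arc i) : Commute (ψ u) (θB i) := by
  have hi_lt {a : Fin n} (ha : a ∉ arc i) : hi i < a := by
    simp only [arc, Set.mem_insert_iff, Set.mem_singleton_iff, lo, hi, Fin.ext_iff,
      Fin.lt_def] at *
    omega
  have mem_arc_iff (x : Fin n) : u x ∈ arc i ↔ x ∈ arc i := by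
    simpa only [hu, Perm.smul_def] using Set.smul_mem_smul_set_iff (a := u) (s := arc i) (x := x)
  refine mem_of_forall_swap_apply_mem (mapCentralizer ψ (θB i)) fun x => ?_
  by_cases hx : x ∈ arc i
  · exact swap_mem_mapCentralizer_of_mem_arc hψ hx ((mem_arc_iff x).2 hx)
  · exact swap_mem_mapCentralizer_of_hi_lt hψ (hi_lt hx) (hi_lt (mt (mem_arc_iff x).1 hx))

theorem semiconjBy_of_smul_arc_eq (hψ : ∀ i, ψ (sPerm i) = σB i) {w : Perm (Fin n)}
    {i j : Fin (n - 1)} (h : w • arc i = arc j) : SemiconjBy (ψ w) (θB i) (θB j) := by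
  let z : Fin (n - 1) := ⟨0, i.pos⟩
  obtain ⟨c, hc, hcθ⟩ := exists_smul_arc_eq_and_semiconjBy hψ (show z ≤ i from Nat.zero_le _)
  obtain ⟨d, hd, hdθ⟩ := exists_smul_arc_eq_and_semiconjBy hψ (show z ≤ j from Nat.zero_le _)
  have hstab : (d⁻¹ * w * c) • arc z = arc z := by
    rw [mul_smul, mul_smul, hc, h, ← hd, inv_smul_smul]
  have hw : w = d * (d⁻¹ * w * c) * c⁻¹ := by group
  rw [hw, map_mul, map_mul]
  exact (hdθ.mul_left (commute_of_smul_arc_eq_self hψ rfl hstab)).mul_left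
    (semiconjBy_map_inv ψ hcθ)

theorem brauer_conj_theta_general (ψ : Perm (Fin n) →* BrauerMonoid n)
    (hψ : ∀ i, ψ (sPerm i) = σB i) (w : Perm (Fin n)) (i j : Fin (n - 1)) :
    ψ w * θB i * ψ w⁻¹ = θB j ↔ w '' {lo i, hi i} = {lo j, hi j} := by
  rw [map_mul_mul_map_inv_eq_iff]
  exact ⟨smul_arc_eq_of_semiconjBy hψ, semiconjBy_of_smul_arc_eq hψ⟩

end Conjugacy

/-- Lemma `lemma202` of Kudryavtseva–Mazorchuk: for every permutation `w` of `{1, …, n}`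
and every `i`, one has `ψ(w⁻¹) θ_1 ψ(w) = θ_i` if and only if `w` maps the set `{1, 2}`
onto the set `{i, i+1}`.  (The symmetric group acts on `{1, …, n}` on the *right*; the
right action of `w` on a point `x` is `w⁻¹ x` in terms of Mathlib's left-composition
convention for `Equiv.Perm`, so `w({1,2})` is the image of `{1,2}` under `⇑w⁻¹`.) -/
theorem brauer_conj_theta (n : ℕ) (hn : 2 ≤ n)
    (ψ : Equiv.Perm (Fin n) →* BrauerMonoid n)
    (hψ : ∀ i : Fin (n - 1), ψ (sPerm i) = σB i)
    (w : Equiv.Perm (Fin n)) (i : Fin (n - 1)) :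
    ψ w⁻¹ * θB ⟨0, by omega⟩ * ψ w = θB i ↔
      ⇑w⁻¹ '' ({⟨0, by omega⟩, ⟨1, by omega⟩} : Set (Fin n)) = {lo i, hi i} := by
  have h := brauer_conj_theta_general ψ hψ w⁻¹ ⟨0, by omega⟩ i
  rwa [inv_inv] at h
end

section
/- Let ψ : Perm(Fin n) → T be the monoid homomorphism with ψ(s_i) = σ_i, and for 0 ≤ k ≤ ⌊n/2⌋ let δ_k = θ_1θ_3⋯θ_{2k−1} (with δ_0 = 1). Then the set { ψ(w)·δ_k·ψ(v) : w, v ∈ Perm(Fin n) } has at most (n!)² / (2^{2k}·(k!)²·(n−2k)!) elements (this quotient is an exact natural-number division). -/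
/-- The canonical element `δ_k = θ_1 θ_3 ⋯ θ_{2k-1}` of `T` (with `δ_0 = 1`),
for `0 ≤ k ≤ ⌊n/2⌋`. -/
def δB (n : ℕ) (k : ℕ) (hk : k ≤ n / 2) : BrauerMonoid n :=
  (List.ofFn fun j : Fin k => θB (n := n) ⟨2 * j.1, by have := j.2; omega⟩).prod

/-!
`S_n × S_n` acts on `T` by `(w, v) • x = ψ(w) x ψ(v)⁻¹`, so the orbit of `δ_k` is counted by the
index of its stabilizer. Split the `n` points into the `k` consecutive pairs `{2j-1, 2j}` and the
`n - 2k` remaining ones. The relations show that `δ_k` is fixed, on either side, by the flips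
`σ_{2j-1}` and by the exchanges `σ_{2j} σ_{2j-1} σ_{2j+1} σ_{2j}` of neighbouring pairs, hence by
the wreath product `S_2 ≀ S_k`, and that it commutes with the permutations of the remaining points.
So the stabilizer contains a copy of `(S_2 ≀ S_k) × (S_2 ≀ S_k) × S_{n-2k}`.
-/

open Equiv Equiv.Perm MulOpposite

section TwoSidedOrbit

variable {G H K M : Type*} [Group G] [Group H] [Group K] [Monoid M]

/-- The action `(w, v) • x = ψ w * x * ψ v⁻¹` of `G × G` on a monoid, whose orbits are the sets
`ψ(G) x ψ(G)`. It is not an instance, since it depends on `ψ`. -/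
abbrev twoSidedMulAction (ψ : G →* M) : MulAction (G × G) M where
  smul p x := ψ p.1 * x * ψ p.2⁻¹
  one_smul x := show ψ 1 * x * ψ 1⁻¹ = x by simp
  mul_smul p q x :=
    show ψ (p.1 * q.1) * x * ψ (p.2 * q.2)⁻¹ = ψ p.1 * (ψ q.1 * x * ψ q.2⁻¹) * ψ p.2⁻¹ by
      simp [mul_assoc]

/-- The stabilizer of `x` under `twoSidedMulAction ψ`. -/
def twoSidedStabilizer (ψ : G →* M) (x : M) : Subgroup (G × G) :=
  letI := twoSidedMulAction ψ
  MulAction.stabilizer (G × G) x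

theorem mem_twoSidedStabilizer {ψ : G →* M} {x : M} {p : G × G} :
    p ∈ twoSidedStabilizer ψ x ↔ ψ p.1 * x = x * ψ p.2 := by
  change ψ p.1 * x * ψ p.2⁻¹ = x ↔ _
  constructor <;> intro h
  · nth_rw 2 [← h]
    simp [mul_assoc, ← map_mul]
  · simp [h, mul_assoc, ← map_mul]

theorem ncard_twoSidedOrbit (ψ : G →* M) (x : M) :
    {y | ∃ w v, y = ψ w * x * ψ v}.ncard = (twoSidedStabilizer ψ x).index := by
  let _ := twoSidedMulAction ψ
  have orbit_eq : {y | ∃ w v, y = ψ w * x * ψ v} = MulAction.orbit (G × G) x := by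
    ext y
    constructor
    · rintro ⟨w, v, rfl⟩
      exact ⟨(w, v⁻¹), show ψ w * x * ψ v⁻¹⁻¹ = _ by rw [inv_inv]⟩
    · rintro ⟨⟨w, v⟩, rfl⟩
      exact ⟨w, v⁻¹, rfl⟩
  rw [orbit_eq, twoSidedStabilizer, MulAction.index_stabilizer]

/-- The elements of `G` that fix `x` under multiplication from the left and from the right. -/
def twoSidedFixer (ψ : G →* M) (x : M) : Subgroup G :=
  (twoSidedStabilizer ψ x).comap (MonoidHom.inl G G) ⊓
    (twoSidedStabilizer ψ x).comap (MonoidHom.inr G G)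

theorem mem_twoSidedFixer {ψ : G →* M} {x : M} {g : G} :
    g ∈ twoSidedFixer ψ x ↔ ψ g * x = x ∧ x * ψ g = x := by
  simp [twoSidedFixer, mem_twoSidedStabilizer, eq_comm (a := x)]

theorem mk_mem_twoSidedStabilizer {ψ : G →* M} {x : M} {a b c : G}
    (ha : a ∈ twoSidedFixer ψ x) (hb : b ∈ twoSidedFixer ψ x) (hc : Commute (ψ c) x) :
    (c * a, b * c) ∈ twoSidedStabilizer ψ x := by
  rw [mem_twoSidedStabilizer]
  calc ψ (c * a) * x = ψ c * x := by rw [map_mul, mul_assoc, (mem_twoSidedFixer.1 ha).1]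
    _ = x * ψ c := hc
    _ = x * ψ (b * c) := by rw [map_mul, ← mul_assoc, (mem_twoSidedFixer.1 hb).2]

theorem ncard_twoSidedOrbit_mul_card_dvd {ψ : G →* M} {x : M} {f : H × K →* G}
    (hf : Function.Injective f) (hH : ∀ h, f (h, 1) ∈ twoSidedFixer ψ x)
    (hK : ∀ t, Commute (ψ (f (1, t))) x) :
    {y | ∃ w v, y = ψ w * x * ψ v}.ncard * (Nat.card H ^ 2 * Nat.card K) ∣ Nat.card G ^ 2 := by
  let F : H × H × K →* G × G :=
    (f.comp ((MonoidHom.id H).prodMap (MonoidHom.snd H K))).prod (f.comp (MonoidHom.snd H (H × K)))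
  have F_injective : Function.Injective F := by
    rintro ⟨a, b, c⟩ ⟨a', b', c'⟩ h
    have h₁ := hf (congrArg Prod.fst h)
    have h₂ := hf (congrArg Prod.snd h)
    simp_all
  have range_le : F.range ≤ twoSidedStabilizer ψ x := by
    rintro _ ⟨⟨a, b, c⟩, rfl⟩
    have hF : F (a, b, c) = (f (1, c) * f (a, 1), f (b, 1) * f (1, c)) := by
      simp [F, ← map_mul]
    exact hF ▸ mk_mem_twoSidedStabilizer (hH a) (hH b) (hK c)
  have card_range : Nat.card F.range = Nat.card H ^ 2 * Nat.card K := by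
    rw [← Nat.card_congr (MonoidHom.ofInjective F_injective).toEquiv, Nat.card_prod, Nat.card_prod]
    ring
  rw [ncard_twoSidedOrbit, ← card_range, sq, ← Nat.card_prod,
    ← (twoSidedStabilizer ψ x).index_mul_card]
  exact mul_dvd_mul_left _ (Subgroup.card_dvd_of_le range_le)

end TwoSidedOrbit

section WreathProduct

/-- The permutational wreath product `Perm β ≀ Perm ι`, for `β` of two elements the
hyperoctahedral group. -/
abbrev WreathPerm (ι β : Type*) :=
  (ι → Perm β) ⋊[(mulAutArrow : Perm ι →* MulAut (ι → Perm β))] Perm ι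

/-- The imprimitive action of the wreath product: `ε : ι → Perm β` acts by `ε i` on the block
`{i} × β`, and `Perm ι` permutes the blocks. -/
def wreathPermHom (ι β : Type*) : WreathPerm ι β →* Perm (ι × β) where
  toFun g := prodCongrRight g.left * prodCongr g.right 1
  map_one' := rfl
  map_mul' g h := by
    ext1 ⟨i, b⟩
    have transport : mulAutArrow g.right h.left (g.right (h.right i)) = h.left (h.right i) :=
      congrArg h.left (g.right.symm_apply_apply _)
    simp [-mulAutArrow_apply_apply, transport]

variable {ι β : Type*}

theorem wreathPermHom_apply (g : WreathPerm ι β) (i : ι) (b : β) :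
    wreathPermHom ι β g (i, b) = (g.right i, g.left (g.right i) b) := rfl

theorem wreathPermHom_injective [Nonempty β] : Function.Injective (wreathPermHom ι β) := by
  intro g g' h
  have apply_eq (i : ι) (b : β) :
      (g.right i, g.left (g.right i) b) = (g'.right i, g'.left (g'.right i) b) :=
    congrArg (· (i, b)) h
  have right_eq : g.right = g'.right := by
    ext i
    exact congrArg Prod.fst (apply_eq i (Classical.arbitrary β))
  refine SemidirectProduct.ext (funext fun i => Equiv.ext fun b => ?_) right_eq
  simpa [← right_eq] using congrArg Prod.snd (apply_eq (g.right.symm i) b)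

theorem wreathPermHom_inl_mulSingle_swap [DecidableEq ι] [DecidableEq β] (i : ι) (a b : β) :
    wreathPermHom ι β (.inl (Pi.mulSingle i (swap a b))) = swap (i, a) (i, b) := by
  ext1 ⟨j, c⟩
  rw [wreathPermHom_apply, SemidirectProduct.right_inl, SemidirectProduct.left_inl, Perm.one_apply]
  rcases eq_or_ne j i with rfl | hj
  · rw [Pi.mulSingle_eq_same]
    grind
  · rw [Pi.mulSingle_eq_of_ne hj, Perm.one_apply]
    grind

theorem wreathPermHom_inr_swap [DecidableEq ι] (i j : ι) :
    wreathPermHom ι (Fin 2) (.inr (swap i j)) = swap (i, 0) (j, 0) * swap (i, 1) (j, 1) := by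
  ext1 ⟨l, b⟩
  rw [wreathPermHom_apply, SemidirectProduct.right_inr, SemidirectProduct.left_inr, Pi.one_apply,
    Perm.one_apply, Perm.mul_apply]
  fin_cases b <;> grind

theorem swap_mul_swap_mul_swap_mul_swap {α : Type*} [DecidableEq α] {a b c d : α}
    (hab : a ≠ b) (hac : a ≠ c) (hdb : d ≠ b) (hdc : d ≠ c) :
    swap b c * (swap a b * swap c d) * swap b c = swap a c * swap b d := by
  calc swap b c * (swap a b * swap c d) * swap b c
      = (swap b c * swap a b * swap b c) * (swap b c * swap c d * swap b c) := by
        simp only [mul_assoc, swap_mul_self_mul]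
    _ = swap a c * swap b d := by
        rw [swap_mul_swap_mul_swap hab hac, swap_comm c d, swap_comm b c,
          swap_mul_swap_mul_swap hdc hdb, swap_comm c a]

theorem mem_of_forall_adjacent_swap_mem {m : ℕ} {S : Submonoid (Perm (Fin m))}
    (hS : ∀ a b : Fin m, b.1 = a.1 + 1 → swap a b ∈ S) (π : Perm (Fin m)) : π ∈ S := by
  cases m with
  | zero => exact Subsingleton.elim 1 π ▸ S.one_mem
  | succ m =>
    suffices ⊤ ≤ S from this (Submonoid.mem_top π)
    rw [← mclosure_swap_castSucc_succ, Submonoid.closure_le]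
    rintro _ ⟨i, rfl⟩
    exact hS _ _ (by simp)

theorem wreathPerm_mem_of_forall_adjacent_swap_mem {k m : ℕ}
    {S : Subgroup (WreathPerm (Fin k) (Fin m))}
    (hflip : ∀ j, ∀ a b : Fin m, b.1 = a.1 + 1 → .inl (Pi.mulSingle j (swap a b)) ∈ S)
    (hswap : ∀ i j : Fin k, j.1 = i.1 + 1 → .inr (swap i j) ∈ S)
    (g : WreathPerm (Fin k) (Fin m)) : g ∈ S := by
  have inl_mem (ε : Fin k → Perm (Fin m)) : .inl ε ∈ S :=
    Subgroup.pi_mem_of_mulSingle_mem (H := S.comap SemidirectProduct.inl) ε fun j =>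
      mem_of_forall_adjacent_swap_mem
        (S := (S.comap (SemidirectProduct.inl.comp
          (MonoidHom.mulSingle (fun _ => Perm (Fin m)) j))).toSubmonoid)
        (hflip j) (ε j)
  have inr_mem (π : Perm (Fin k)) : .inr π ∈ S :=
    mem_of_forall_adjacent_swap_mem (S := (S.comap SemidirectProduct.inr).toSubmonoid) hswap π
  rw [← SemidirectProduct.inl_left_mul_inr_right g]
  exact S.mul_mem (inl_mem _) (inr_mem _)

theorem card_wreathPerm_fin (k m : ℕ) :
    Nat.card (WreathPerm (Fin k) (Fin m)) = m.factorial ^ k * k.factorial := by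
  rw [SemidirectProduct.card, Nat.card_fun]
  simp only [Nat.card_perm, Nat.card_fin]

end WreathProduct

section Monoid

variable {M : Type*} [Monoid M]

theorem mul_list_prod_eq_of_mem {l : List M} {x : M} (hx : x ∈ l) (hidem : IsIdempotentElem x)
    (hcomm : ∀ y ∈ l, Commute x y) : x * l.prod = l.prod := by
  obtain ⟨s, t, rfl⟩ := List.append_of_mem hx
  have hs : Commute x s.prod := Commute.list_prod_right _ _ fun y hy => hcomm y (by simp [hy])
  rw [List.prod_append, List.prod_cons, ← mul_assoc, hs.eq, mul_assoc, ← mul_assoc x, hidem.eq]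

variable {sa sb sc ta tb tc : M}

theorem exchange_mul_eq_of_relations (ha : sa * sa = 1) (hb : sb * sb = 1)
    (hs : Commute sa sc) (ht : Commute ta tc)
    (hta : sa * tb * ta = sb * ta) (htc : sc * tb * tc = sb * tc) :
    sb * (sa * sc) * sb * (ta * tc) = ta * tc := by
  have slide : sa * (sb * ta) = tb * ta := by
    rw [← hta, mul_assoc sa, ← mul_assoc, ha, one_mul]
  calc sb * (sa * sc) * sb * (ta * tc)
      = sb * sc * (sa * (sb * ta)) * tc := by simp only [hs.eq, mul_assoc]
    _ = sb * (sc * tb * tc) * ta := by simp only [slide, ht.eq, mul_assoc]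
    _ = ta * tc := by rw [htc, ← mul_assoc, hb, one_mul, ht.eq]

theorem mul_exchange_eq_of_relations (ha : sa * sa = 1) (hb : sb * sb = 1)
    (hs : Commute sa sc) (ht : Commute ta tc)
    (hta : ta * tb * sa = ta * sb) (htc : tc * tb * sc = tc * sb) :
    ta * tc * (sb * (sa * sc) * sb) = ta * tc := by
  apply op_injective
  have mirrored := exchange_mul_eq_of_relations
    (sa := op sa) (sb := op sb) (sc := op sc) (ta := op ta) (tb := op tb) (tc := op tc)
    (congrArg op ha) (congrArg op hb) hs.op ht.op
    (by simpa only [← op_mul, mul_assoc] using congrArg op hta)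
    (by simpa only [← op_mul, mul_assoc] using congrArg op htc)
  simpa only [← op_mul, hs.eq, ht.eq, mul_assoc] using mirrored

end Monoid

namespace BrauerMonoid

variable {n : ℕ}

section Relations

theorem mk_eq_of_rel {a b : FreeMonoid (BrauerGen n)} (h : BrauerRel n a b) :
    PresentedMonoid.mk (BrauerRel n) a = PresentedMonoid.mk (BrauerRel n) b :=
  (Con.eq _).2 (ConGen.Rel.of _ _ h)

variable {i j : Fin (n - 1)}

theorem σB_mul_self : σB i * σB i = 1 := mk_eq_of_rel (.sigma_sq i)

theorem isIdempotentElem_θB : IsIdempotentElem (θB i) := mk_eq_of_rel (.theta_idem i)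

theorem σB_mul_θB_self : σB i * θB i = θB i := mk_eq_of_rel (.sigma_theta i)

theorem θB_mul_σB_self : θB i * σB i = θB i := mk_eq_of_rel (.theta_sigma i)

theorem commute_σB_σB (h : 1 < Nat.dist i.1 j.1) : Commute (σB i) (σB j) :=
  mk_eq_of_rel (.sigma_comm i j h)

theorem commute_θB_θB (h : 1 < Nat.dist i.1 j.1) : Commute (θB i) (θB j) :=
  mk_eq_of_rel (.theta_comm i j h)

theorem commute_θB_σB (h : 1 < Nat.dist i.1 j.1) : Commute (θB i) (σB j) :=
  mk_eq_of_rel (.theta_sigma_comm i j h)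

theorem σB_mul_θB_mul_θB (h : Nat.dist i.1 j.1 = 1) : σB i * θB j * θB i = σB j * θB i :=
  mk_eq_of_rel (.sigma_theta_theta i j h)

theorem θB_mul_θB_mul_σB (h : Nat.dist i.1 j.1 = 1) : θB i * θB j * σB i = θB i * σB j :=
  mk_eq_of_rel (.theta_theta_sigma i j h)

end Relations

variable {k : ℕ} (hk : k ≤ n / 2)

section CanonicalElement

/-- The index of the factor `θ_{2j+1}` of `δ_k`, which is `2j` in the 0-based numbering. -/
def pairIndex (j : Fin k) : Fin (n - 1) := ⟨2 * j.1, by omega⟩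

theorem commute_δB {x : BrauerMonoid n} (h : ∀ j, Commute x (θB (pairIndex hk j))) :
    Commute x (δB n k hk) := by
  refine Commute.list_prod_right _ _ fun y hy => ?_
  obtain ⟨j, rfl⟩ := (List.mem_ofFn' _ _).1 hy
  exact h j

theorem commute_θB_pairIndex (i j : Fin k) :
    Commute (θB (pairIndex hk i)) (θB (pairIndex hk j)) := by
  rcases eq_or_ne i j with rfl | hij
  · exact Commute.refl _
  · exact commute_θB_θB (by simp only [pairIndex, Nat.dist]; omega)

theorem θB_mul_δB (j : Fin k) : θB (pairIndex hk j) * δB n k hk = δB n k hk := by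
  refine mul_list_prod_eq_of_mem ((List.mem_ofFn' _ _).2 ⟨j, rfl⟩) isIdempotentElem_θB
    fun y hy => ?_
  obtain ⟨i, rfl⟩ := (List.mem_ofFn' _ _).1 hy
  exact commute_θB_pairIndex hk j i

theorem δB_mul_θB (j : Fin k) : δB n k hk * θB (pairIndex hk j) = δB n k hk := by
  rw [← (commute_δB hk (commute_θB_pairIndex hk j)).eq, θB_mul_δB]

end CanonicalElement

section BlockPermutations

/-- The decomposition of the `n` points into `k` consecutive pairs followed by the rest. -/
def blockEquiv : (Fin k × Fin 2) ⊕ Fin (n - 2 * k) ≃ Fin n :=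
  (finProdFinEquiv.sumCongr (Equiv.refl _)).trans
    (finSumFinEquiv.trans (finCongr (by omega)))

theorem blockEquiv_inl_val (j : Fin k) (b : Fin 2) :
    (blockEquiv hk (.inl (j, b))).1 = b.1 + 2 * j.1 := rfl

theorem blockEquiv_inr_val (i : Fin (n - 2 * k)) :
    (blockEquiv hk (.inr i)).1 = k * 2 + i.1 := rfl

/-- The embedding of `(S_2 ≀ S_k) × S_{n-2k}` into `S_n` along `blockEquiv`. -/
def blockPermHom : WreathPerm (Fin k) (Fin 2) × Perm (Fin (n - 2 * k)) →* Perm (Fin n) :=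
  (permCongrHom (blockEquiv hk)).toMonoidHom.comp
    ((sumCongrHom _ _).comp ((wreathPermHom _ _).prodMap (MonoidHom.id _)))

theorem blockPermHom_injective : Function.Injective (blockPermHom hk) :=
  (permCongrHom (blockEquiv hk)).injective.comp <| sumCongrHom_injective.comp <|
    wreathPermHom_injective.prodMap Function.injective_id

variable {hk}

theorem blockPermHom_eq_swap_of_left {g : WreathPerm (Fin k) (Fin 2)} {x y : Fin k × Fin 2}
    (hg : wreathPermHom _ _ g = swap x y) :
    blockPermHom hk (g, 1) = swap (blockEquiv hk (.inl x)) (blockEquiv hk (.inl y)) := by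
  rw [← symm_trans_swap_trans, ← sumCongr_swap_one, ← hg]
  rfl

theorem blockPermHom_one_swap (a b : Fin (n - 2 * k)) :
    blockPermHom hk (1, swap a b) = swap (blockEquiv hk (.inr a)) (blockEquiv hk (.inr b)) := by
  rw [← symm_trans_swap_trans, ← sumCongr_one_swap, ← map_one (wreathPermHom (Fin k) (Fin 2))]
  rfl

theorem blockPermHom_inr_swap_one (i j : Fin k) :
    blockPermHom hk (.inr (swap i j), 1) =
      swap (blockEquiv hk (.inl (i, 0))) (blockEquiv hk (.inl (j, 0))) *
        swap (blockEquiv hk (.inl (i, 1))) (blockEquiv hk (.inl (j, 1))) := by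
  simp only [← symm_trans_swap_trans, ← sumCongr_swap_one, ← permCongr_def, ← permCongr_mul,
    sumCongr_mul, ← wreathPermHom_inr_swap]
  rfl

theorem sPerm_eq_swap {i : Fin (n - 1)} {a b : Fin n} (ha : a.1 = i.1) (hb : b.1 = i.1 + 1) :
    sPerm i = swap a b := by
  rw [sPerm, Fin.ext (b := lo i) ha, Fin.ext (b := hi i) hb]

theorem sPerm_pairIndex (j : Fin k) :
    sPerm (pairIndex hk j) =
      swap (blockEquiv hk (.inl (j, 0))) (blockEquiv hk (.inl (j, 1))) :=
  sPerm_eq_swap (by simp [blockEquiv_inl_val, pairIndex])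
    (by simp [blockEquiv_inl_val, pairIndex, add_comm])

theorem blockPermHom_flip (j : Fin k) :
    blockPermHom hk (.inl (Pi.mulSingle j (swap 0 1)), 1) = sPerm (pairIndex hk j) := by
  rw [blockPermHom_eq_swap_of_left (wreathPermHom_inl_mulSingle_swap j 0 1), sPerm_pairIndex]

theorem blockPermHom_exchange {i j : Fin k} {m : Fin (n - 1)} (hij : j.1 = i.1 + 1)
    (hm : m.1 = 2 * i.1 + 1) :
    blockPermHom hk (.inr (swap i j), 1) =
      sPerm m * (sPerm (pairIndex hk i) * sPerm (pairIndex hk j)) * sPerm m := by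
  have sPerm_m :
      sPerm m = swap (blockEquiv hk (.inl (i, 1))) (blockEquiv hk (.inl (j, 0))) :=
    sPerm_eq_swap (by rw [blockEquiv_inl_val, Fin.val_one]; omega)
      (by rw [blockEquiv_inl_val, Fin.val_zero]; omega)
  have hne : i ≠ j := by omega
  rw [blockPermHom_inr_swap_one, sPerm_m, sPerm_pairIndex, sPerm_pairIndex,
    swap_mul_swap_mul_swap_mul_swap (by simp) (by simp [hne]) (by simp [hne.symm]) (by simp)]

theorem blockPermHom_one_adjacent_swap {a b : Fin (n - 2 * k)} {m : Fin (n - 1)}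
    (hab : b.1 = a.1 + 1) (hm : m.1 = 2 * k + a.1) :
    blockPermHom hk (1, swap a b) = sPerm m := by
  rw [blockPermHom_one_swap]
  exact (sPerm_eq_swap (by rw [blockEquiv_inr_val]; omega)
    (by rw [blockEquiv_inr_val]; omega)).symm

end BlockPermutations

section Stabilizer

variable {hk} {ψ : Perm (Fin n) →* BrauerMonoid n}

theorem sPerm_pairIndex_mem_twoSidedFixer (hψ : ∀ i, ψ (sPerm i) = σB i) (j : Fin k) :
    sPerm (pairIndex hk j) ∈ twoSidedFixer ψ (δB n k hk) := by
  rw [mem_twoSidedFixer, hψ]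
  constructor
  · rw [← θB_mul_δB hk j, ← mul_assoc, σB_mul_θB_self]
  · rw [← δB_mul_θB hk j, mul_assoc, θB_mul_σB_self]

theorem exchange_mem_twoSidedFixer (hψ : ∀ i, ψ (sPerm i) = σB i) {i j : Fin k} {m : Fin (n - 1)}
    (hij : j.1 = i.1 + 1) (hm : m.1 = 2 * i.1 + 1) :
    sPerm m * (sPerm (pairIndex hk i) * sPerm (pairIndex hk j)) * sPerm m ∈
      twoSidedFixer ψ (δB n k hk) := by
  have dist_i : Nat.dist (pairIndex hk i).1 m.1 = 1 := by simp only [pairIndex, Nat.dist]; omega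
  have dist_j : Nat.dist (pairIndex hk j).1 m.1 = 1 := by simp only [pairIndex, Nat.dist]; omega
  have dist_ij : 1 < Nat.dist (pairIndex hk i).1 (pairIndex hk j).1 := by
    simp only [pairIndex, Nat.dist]; omega
  have hθδ : θB (pairIndex hk i) * θB (pairIndex hk j) * δB n k hk = δB n k hk := by
    rw [mul_assoc, θB_mul_δB, θB_mul_δB]
  have hδθ : δB n k hk * (θB (pairIndex hk i) * θB (pairIndex hk j)) = δB n k hk := by
    rw [← mul_assoc, δB_mul_θB, δB_mul_θB]
  rw [mem_twoSidedFixer]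
  simp only [map_mul, hψ]
  constructor
  · rw [← hθδ, ← mul_assoc, exchange_mul_eq_of_relations σB_mul_self σB_mul_self
      (commute_σB_σB dist_ij) (commute_θB_θB dist_ij) (σB_mul_θB_mul_θB dist_i)
      (σB_mul_θB_mul_θB dist_j)]
  · rw [← hδθ, mul_assoc, mul_exchange_eq_of_relations σB_mul_self σB_mul_self
      (commute_σB_σB dist_ij) (commute_θB_θB dist_ij) (θB_mul_θB_mul_σB dist_i)
      (θB_mul_θB_mul_σB dist_j)]

theorem blockPermHom_mem_twoSidedFixer (hψ : ∀ i, ψ (sPerm i) = σB i)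
    (g : WreathPerm (Fin k) (Fin 2)) :
    blockPermHom hk (g, 1) ∈ twoSidedFixer ψ (δB n k hk) := by
  refine wreathPerm_mem_of_forall_adjacent_swap_mem
    (S := (twoSidedFixer ψ (δB n k hk)).comap ((blockPermHom hk).comp (MonoidHom.inl _ _)))
    (fun j a b hab => ?_) (fun i j hij => ?_) g
  · obtain ⟨rfl, rfl⟩ : a = 0 ∧ b = 1 := by omega
    rw [Subgroup.mem_comap, MonoidHom.comp_apply, MonoidHom.inl_apply, blockPermHom_flip]
    exact sPerm_pairIndex_mem_twoSidedFixer hψ j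
  · rw [Subgroup.mem_comap, MonoidHom.comp_apply, MonoidHom.inl_apply,
      blockPermHom_exchange (m := ⟨2 * i.1 + 1, by omega⟩) hij rfl]
    exact exchange_mem_twoSidedFixer hψ hij rfl

theorem commute_blockPermHom_δB (hψ : ∀ i, ψ (sPerm i) = σB i) (π : Perm (Fin (n - 2 * k))) :
    Commute (ψ (blockPermHom hk (1, π))) (δB n k hk) := by
  suffices π ∈ (Submonoid.centralizer {δB n k hk}).comap
      (ψ.comp ((blockPermHom hk).comp (MonoidHom.inr _ _))) from
    (Submonoid.mem_centralizer_iff.1 this _ rfl).symm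
  refine mem_of_forall_adjacent_swap_mem (fun a b hab => ?_) π
  have hm : 2 * k + a.1 < n - 1 := by omega
  have commute_σB : Commute (σB ⟨2 * k + a.1, hm⟩) (δB n k hk) :=
    commute_δB hk fun j => (commute_θB_σB (by simp only [pairIndex, Nat.dist]; omega)).symm
  rw [← hψ, ← blockPermHom_one_adjacent_swap (hk := hk) hab rfl] at commute_σB
  exact Submonoid.mem_centralizer_iff.2 fun _ hx => hx ▸ commute_σB.symm

end Stabilizer

end BrauerMonoid

/-- Lemma `lemma222` of Kudryavtseva–Mazorchuk: the `S_n × S_n`-orbit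
`{ψ(w) δ_k ψ(v) : w, v ∈ S_n}` of the canonical element `δ_k` contains at most
`(n!)² / (2^{2k} (k!)² (n-2k)!)` elements. -/
theorem brauer_orbit_card_le (n : ℕ) (hn : 1 ≤ n) (k : ℕ) (hk : k ≤ n / 2)
    (ψ : Equiv.Perm (Fin n) →* BrauerMonoid n)
    (hψ : ∀ i : Fin (n - 1), ψ (sPerm i) = σB i) :
    Set.ncard {x : BrauerMonoid n |
        ∃ w v : Equiv.Perm (Fin n), x = ψ w * δB n k hk * ψ v} ≤
      n.factorial ^ 2 / (2 ^ (2 * k) * k.factorial ^ 2 * (n - 2 * k).factorial) := by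
  have card_dvd := ncard_twoSidedOrbit_mul_card_dvd (BrauerMonoid.blockPermHom_injective hk)
    (BrauerMonoid.blockPermHom_mem_twoSidedFixer hψ) (BrauerMonoid.commute_blockPermHom_δB hψ)
  rw [card_wreathPerm_fin, Nat.card_perm, Nat.card_perm, Nat.card_fin, Nat.card_fin] at card_dvd
  rw [Nat.le_div_iff_mul_le (by positivity)]
  convert Nat.le_of_dvd (by positivity) card_dvd using 2
  rw [Nat.factorial_two]
  ring
end
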